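/- Let (a_n) be an arithmetic sequence with ratios q_n, and x ∈ 𝕋 whose support is q-divergent. Then x ∈ t^s_{(a_n)}(𝕋) if and only if (i) lim_{n ∈ D'} c_n/q_n = 0 in 𝕋 for some D' ⊆ supp(x) with d(supp(x) \ D') = 0, and (ii) for every D ⊆ supp(x) with d(D \ supp(x)) = 0 such that D − 1 is q-bounded, there exists D' ⊆ D with d(D \ D') = 0 and lim_{n ∈ D'} c_n/q_n = 0 in ℝ. -/

import Mathlib

open Filter Topology Set

/-- Upper natural density of a set of naturals. -/
noncomputable def upperDensity (A : Set ℕ) : ℝ :=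
  Filter.limsup (fun n => (Nat.card ↥(A ∩ Set.Iio n) : ℝ) / n) Filter.atTop

/-- `A` has natural density `δ`. -/
def HasDensity (A : Set ℕ) (δ : ℝ) : Prop :=
  Filter.Tendsto (fun n => (Nat.card ↥(A ∩ Set.Iio n) : ℝ) / n) Filter.atTop (nhds δ)

/-- Statistical convergence of a real sequence. -/
def StatTendsto (x : ℕ → ℝ) (ξ : ℝ) : Prop :=
  ∀ ε : ℝ, 0 < ε → HasDensity {n | ε ≤ |x n - ξ|} 0

/-- An arithmetic sequence: `a 0 = 1 < a 1 < a 2 < ⋯` and `a n ∣ a (n+1)`. -/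
def IsArithmeticSeq (a : ℕ → ℕ) : Prop :=
  a 0 = 1 ∧ StrictMono a ∧ ∀ n, a n ∣ a (n + 1)

/-- The ratio `q n = a n / a (n-1)` as a real number. -/
noncomputable def qr (a : ℕ → ℕ) (n : ℕ) : ℝ := (a n : ℝ) / (a (n - 1) : ℝ)

/-- `(c n)` is a canonical representation sequence w.r.t. `(a n)`:
`0 ≤ c n < q n` and `c n < q n - 1` for infinitely many `n`. -/
def IsCanonicalRep (a : ℕ → ℕ) (c : ℕ → ℕ) : Prop :=
  c 0 = 0 ∧ (∀ n, 1 ≤ n → c n < a n / a (n - 1)) ∧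
    (∀ N, ∃ n, N ≤ n ∧ 1 ≤ n ∧ c n + 1 < a n / a (n - 1))

/-- Support of (the canonical representation of) `x`. -/
def suppRep (c : ℕ → ℕ) : Set ℕ := {n | 1 ≤ n ∧ c n ≠ 0}

/-- `supp_q(x) = {n : c n = q n - 1}`. -/
def suppqRep (a c : ℕ → ℕ) : Set ℕ := {n | 1 ≤ n ∧ c n + 1 = a n / a (n - 1)}

/-- A set `S ⊆ ℕ` is `q`-bounded if `(q n)` is bounded on `S`. -/
def QBounded (a : ℕ → ℕ) (S : Set ℕ) : Prop := ∃ M, ∀ n ∈ S, a n / a (n - 1) ≤ M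

/-- A set `S ⊆ ℕ` is `q`-divergent if `q n → ∞` along `n ∈ S`. -/
def QDivergent (a : ℕ → ℕ) (S : Set ℕ) : Prop :=
  Filter.Tendsto (fun n => a n / a (n - 1)) (Filter.atTop ⊓ Filter.principal S) Filter.atTop

/-- Statistical convergence in a topological space, via neighborhoods. -/
def StatNhdTendsto {α : Type*} [TopologicalSpace α] (y : ℕ → α) (ℓ : α) : Prop :=
  ∀ U ∈ nhds ℓ, HasDensity {n | y n ∉ U} 0

/-!
Let `r n = ∑_{k > n} a n * c k / a k ∈ [0, 1]` be the tails of the expansion, so that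
`a n • x = r n` modulo `1` and `r n = (c (n + 1) + r (n + 1)) / q (n + 1)`. Along
`n + 1 ∈ supp x` the ratios diverge, so `r n` and `c (n + 1) / q (n + 1)` have the same limits:
this is (i). Along `n + 1 ∉ supp x` we have `r n = r (n + 1) / q (n + 1) ≤ 1 / 2`, so convergence
to `0` modulo `1` is convergence in `ℝ`. There `r n` is at most `r (n + 1) / 2`, and the halving
propagates as long as the indices avoid the support; when `n + 2 ∈ supp x`, the tail `r n` is
small because `q (n + 1)` is large or, for bounded `q (n + 1)`, because of (ii).

Statistical limits are limits along the filter of sets of density one, of which the argument only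
uses the invariance under translation. This filter is a P-filter, which turns its limits into
ordinary limits along a set of density one.
-/

section Density

theorem natCard_inter_Iio_div_mono {A B : Set ℕ} (h : A ⊆ B) (n : ℕ) :
    (Nat.card ↥(A ∩ Iio n) : ℝ) / n ≤ (Nat.card ↥(B ∩ Iio n) : ℝ) / n := by
  gcongr ?_ / _
  exact_mod_cast Nat.card_mono ((finite_Iio n).inter_of_right B) (inter_subset_inter_left _ h)

theorem natCard_inter_Iio_succ (A : Set ℕ) (n : ℕ) :
    Nat.card ↥(A ∩ Iio (n + 1)) =
      Nat.card ↥((· + 1) ⁻¹' A ∩ Iio n) + Nat.card ↥(A ∩ Iio 1) := by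
  classical
  have card_eq_count (B : Set ℕ) (m : ℕ) : Nat.card ↥(B ∩ Iio m) = Nat.count (· ∈ B) m := by
    rw [Nat.count_eq_card_filter_range, Nat.card_coe_set_eq, ← ncard_coe_finset]
    congr 1
    ext k
    simp [and_comm]
  simp only [card_eq_count, Nat.count_succ' (· ∈ A), Nat.count_zero, zero_add, mem_preimage]

theorem hasDensity_zero_mono {A B : Set ℕ} (h : A ⊆ B) (hB : HasDensity B 0) : HasDensity A 0 :=
  squeeze_zero (fun _ => by positivity) (natCard_inter_Iio_div_mono h) hB

theorem hasDensity_empty : HasDensity ∅ 0 := by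
  simp [HasDensity]

theorem hasDensity_zero_union {A B : Set ℕ} (hA : HasDensity A 0) (hB : HasDensity B 0) :
    HasDensity (A ∪ B) 0 := by
  refine squeeze_zero (fun _ => by positivity) (fun n => ?_) (by simpa using hA.add hB)
  rw [← add_div, union_inter_distrib_right]
  gcongr
  exact_mod_cast ncard_union_le (A ∩ Iio n) (B ∩ Iio n)

theorem hasDensity_preimage_succ_iff {A : Set ℕ} {δ : ℝ} :
    HasDensity ((· + 1) ⁻¹' A) δ ↔ HasDensity A δ := by
  have hratio : Tendsto (fun n : ℕ => ((n : ℝ) + 1) / n) atTop (𝓝 1) := by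
    have := (tendsto_natCast_div_add_atTop (1 : ℝ)).inv₀ one_ne_zero
    simpa using this
  obtain ⟨C, hcard⟩ : ∃ C : ℕ, ∀ n, Nat.card ↥(A ∩ Iio (n + 1)) =
      Nat.card ↥((· + 1) ⁻¹' A ∩ Iio n) + C := ⟨_, natCard_inter_Iio_succ A⟩
  have herror := tendsto_const_div_atTop_nhds_zero_nat (C : ℝ)
  unfold HasDensity
  rw [← tendsto_add_atTop_iff_nat (f := fun n : ℕ => (Nat.card ↥(A ∩ Iio n) : ℝ) / n) 1]
  simp only [hcard, Nat.cast_add, Nat.cast_one]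
  constructor <;> intro h
  · have := (h.add herror).mul (hratio.inv₀ one_ne_zero)
    simp only [add_zero, inv_one, mul_one] at this
    refine this.congr' ?_
    filter_upwards [eventually_ne_atTop 0] with n hn
    field_simp
  · have := (h.mul hratio).sub herror
    simp only [mul_one, sub_zero] at this
    refine this.congr' ?_
    filter_upwards [eventually_ne_atTop 0] with n hn
    field_simp
    ring

end Density

section TranslationInvariant

variable {F : Filter ℕ}

theorem le_atTop_of_map_succ_eq (hF : map (· + 1) F = F) : F ≤ atTop := by
  refine le_iInf fun k => le_principal_iff.2 ?_
  induction k with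
  | zero => simp
  | succ k ih =>
    rw [← hF, mem_map]
    simpa [preimage, Ici] using ih

theorem tendsto_inf_principal_succ_iff (hF : map (· + 1) F = F) {α : Type*} {l : Filter α}
    {f : ℕ → α} {A : Set ℕ} :
    Tendsto (fun n => f (n + 1)) (F ⊓ 𝓟 ((· + 1) ⁻¹' A)) l ↔ Tendsto f (F ⊓ 𝓟 A) l := by
  conv_rhs => rw [← hF, ← map_inf_principal_preimage, tendsto_map'_iff]
  rfl

theorem tendsto_zero_of_eventually_le_max_half (hF : map (· + 1) F = F) {u : ℕ → ℝ} {C : ℝ}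
    (hu₀ : ∀ n, 0 ≤ u n) (huC : ∀ n, u n ≤ C)
    (hu : ∀ ε > 0, ∀ᶠ n in F, u n ≤ max ε (u (n + 1) / 2)) : Tendsto u F (𝓝 0) := by
  have hpow (ε : ℝ) (hε : 0 < ε) (L : ℕ) : ∀ᶠ n in F, u n ≤ max ε (C / 2 ^ L) := by
    induction L with
    | zero => exact .of_forall fun n => by simp [huC n]
    | succ L ih =>
      have ih_succ : ∀ᶠ n in F, u (n + 1) ≤ max ε (C / 2 ^ L) := by
        rwa [← hF, eventually_map] at ih
      filter_upwards [hu ε hε, ih_succ] with n hn hn'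
      refine hn.trans (max_le (le_max_left _ _) ?_)
      rw [pow_succ, ← div_div]
      rcases le_max_iff.1 hn' with h | h
      · exact le_max_of_le_left (by linarith)
      · exact le_max_of_le_right (by linarith)
  rw [Metric.tendsto_nhds]
  intro ε hε
  have hlim : Tendsto (fun L : ℕ => C / 2 ^ L) atTop (𝓝 0) :=
    tendsto_const_nhds.div_atTop (tendsto_pow_atTop_atTop_of_one_lt one_lt_two)
  obtain ⟨L, hL⟩ := (hlim.eventually_lt_const hε).exists
  filter_upwards [hpow (ε / 2) (half_pos hε) L] with n hn
  rw [Real.dist_0_eq_abs, abs_of_nonneg (hu₀ n)]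
  exact hn.trans_lt (max_lt (half_lt_self hε) hL)

end TranslationInvariant

section DensityOne

/-- The filter of sets of natural density one, encoded as the sets whose complement has density
zero. Convergence along it is statistical convergence. -/
def densityOne : Filter ℕ where
  sets := {A | HasDensity Aᶜ 0}
  univ_sets := by simpa using hasDensity_empty
  sets_of_superset hA hAB := hasDensity_zero_mono (compl_subset_compl.2 hAB) hA
  inter_sets hA hB := by simpa [compl_inter] using hasDensity_zero_union hA hB

theorem mem_densityOne {A : Set ℕ} : A ∈ densityOne ↔ HasDensity Aᶜ 0 := Iff.rfl

theorem statNhdTendsto_iff_tendsto_densityOne {α : Type*} [TopologicalSpace α] {y : ℕ → α}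
    {ℓ : α} : StatNhdTendsto y ℓ ↔ Tendsto y densityOne (𝓝 ℓ) := Iff.rfl

theorem map_succ_densityOne : map (· + 1) densityOne = densityOne := by
  ext A
  exact hasDensity_preimage_succ_iff (A := Aᶜ)

theorem densityOne_le_atTop : densityOne ≤ atTop :=
  le_atTop_of_map_succ_eq map_succ_densityOne

theorem exists_monotone_tendsto_eventually {P : ℕ → ℕ → Prop}
    (hP : ∀ k, ∀ᶠ n in atTop, P k n) :
    ∃ K : ℕ → ℕ, Monotone K ∧ Tendsto K atTop atTop ∧ ∀ᶠ n in atTop, P (K n) n := by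
  simp only [eventually_atTop] at hP
  choose N hN using hP
  refine ⟨fun n => Nat.findGreatest (N · ≤ n) n,
    fun m n hmn => Nat.findGreatest_mono (fun _ hk => hk.trans hmn) hmn,
    tendsto_atTop.2 fun k => ?_, ?_⟩
  · filter_upwards [eventually_ge_atTop k, eventually_ge_atTop (N k)] with n hkn hNn
    exact Nat.le_findGreatest hkn hNn
  · filter_upwards [eventually_ge_atTop (N 0)] with n hn
    exact hN _ _ (Nat.findGreatest_spec (P := (N · ≤ n)) n.zero_le hn)

theorem exists_mem_densityOne_forall_eventually {A : ℕ → Set ℕ} (hA : Antitone A)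
    (hmem : ∀ k, A k ∈ densityOne) :
    ∃ B ∈ densityOne, ∀ k, ∀ᶠ n in atTop, n ∈ B → n ∈ A k := by
  have hsmall (k : ℕ) :
      ∀ᶠ n : ℕ in atTop, (Nat.card ↥((A k)ᶜ ∩ Iio n) : ℝ) / n ≤ 1 / ((k : ℝ) + 1) :=
    (hmem k : Tendsto _ _ _).eventually_le_const (by positivity)
  obtain ⟨K, hKmono, hKtop, hK⟩ := exists_monotone_tendsto_eventually hsmall
  refine ⟨{n | n ∈ A (K n)}, ?_, fun k => ?_⟩
  · refine squeeze_zero' (.of_forall fun _ => by positivity) ?_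
      (tendsto_one_div_add_atTop_nhds_zero_nat.comp hKtop)
    filter_upwards [hK] with n hn
    have hsub : {m | m ∈ A (K m)}ᶜ ∩ Iio n ⊆ (A (K n))ᶜ :=
      fun m ⟨hm, hmn⟩ h => hm (hA (hKmono (le_of_lt hmn)) h)
    refine le_trans ?_ hn
    simpa [inter_assoc] using natCard_inter_Iio_div_mono hsub n
  · filter_upwards [hKtop.eventually_ge_atTop k] with n hn hmem
    exact hA hn hmem

theorem exists_subset_tendsto_iff_tendsto_densityOne {α : Type*} {l : Filter α}
    [l.IsCountablyGenerated] {g : ℕ → α} {S : Set ℕ} :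
    (∃ D ⊆ S, HasDensity (S \ D) 0 ∧ Tendsto g (atTop ⊓ 𝓟 D) l) ↔
      Tendsto g (densityOne ⊓ 𝓟 S) l := by
  constructor
  · rintro ⟨D, -, hD, hg⟩
    refine hg.mono_left (le_inf (inf_le_left.trans densityOne_le_atTop) ?_)
    rw [le_principal_iff, mem_inf_principal']
    simpa [mem_densityOne, sdiff_eq] using hD
  · intro hg
    obtain ⟨U, hU⟩ := l.exists_antitone_basis
    obtain ⟨B, hB, hBU⟩ := exists_mem_densityOne_forall_eventually
      (A := fun k => {n | n ∈ S → g n ∈ U k})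
      (fun i j hij n hn hnS => hU.antitone hij (hn hnS))
      (fun k => mem_inf_principal.1 (hg (hU.mem k)))
    refine ⟨S ∩ B, inter_subset_left, ?_, ?_⟩
    · rw [sdiff_self_inter]
      exact hasDensity_zero_mono (fun _ hn => hn.2) hB
    · refine hU.tendsto_right_iff.2 fun k _ => eventually_inf_principal.2 ?_
      filter_upwards [hBU k] with n hn ⟨hnS, hnB⟩
      exact hn hnB hnS

end DensityOne

section AddCircle

theorem tendsto_coe_addCircle_zero {α : Type*} {l : Filter α} {u : α → ℝ} (p : ℝ)
    (hu : Tendsto u l (𝓝 0)) : Tendsto (fun i => (u i : AddCircle p)) l (𝓝 0) :=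
  ((AddCircle.continuous_mk' p).tendsto' 0 0 rfl).comp hu

theorem tendsto_coe_addCircle_zero_iff {α : Type*} {l : Filter α} {u : α → ℝ} {p : ℝ}
    (hp : p ≠ 0) (hu : ∀ᶠ i in l, |u i| ≤ |p| / 2) :
    Tendsto (fun i => (u i : AddCircle p)) l (𝓝 0) ↔ Tendsto u l (𝓝 0) := by
  rw [tendsto_zero_iff_norm_tendsto_zero, tendsto_zero_iff_norm_tendsto_zero (f := u)]
  refine tendsto_congr' ?_
  filter_upwards [hu] with i hi
  exact (AddCircle.norm_coe_eq_abs_iff p hp).2 hi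

end AddCircle

section Ratio

variable {a : ℕ → ℕ}

theorem IsArithmeticSeq.pos (ha : IsArithmeticSeq a) (n : ℕ) : 0 < a n := by
  have := ha.2.1.monotone n.zero_le
  have := ha.1
  lia

theorem IsArithmeticSeq.cast_pos (ha : IsArithmeticSeq a) (n : ℕ) : (0 : ℝ) < a n :=
  Nat.cast_pos.2 (ha.pos n)

theorem IsArithmeticSeq.dvd (ha : IsArithmeticSeq a) {m n : ℕ} (hmn : m ≤ n) : a m ∣ a n :=
  Nat.le_induction dvd_rfl (fun n _ ih => ih.trans (ha.2.2 n)) n hmn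

theorem IsArithmeticSeq.cast_div_eq_qr (ha : IsArithmeticSeq a) (n : ℕ) :
    ((a n / a (n - 1) : ℕ) : ℝ) = qr a n :=
  Nat.cast_div (ha.dvd (n.sub_le 1)) (ha.cast_pos _).ne'

theorem IsArithmeticSeq.qr_pos (ha : IsArithmeticSeq a) (n : ℕ) : 0 < qr a n :=
  div_pos (ha.cast_pos _) (ha.cast_pos _)

theorem IsArithmeticSeq.two_le_qr_succ (ha : IsArithmeticSeq a) (n : ℕ) :
    2 ≤ qr a (n + 1) := by
  have hlt : 1 * a n < a (n + 1) := by simpa using ha.2.1 n.lt_succ_self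
  rw [← ha.cast_div_eq_qr]
  exact_mod_cast Nat.lt_of_mul_lt_mul_right
    (hlt.trans_eq (Nat.div_mul_cancel (ha.2.2 n)).symm)

theorem IsArithmeticSeq.tendsto_qr (ha : IsArithmeticSeq a) {l : Filter ℕ}
    (hq : Tendsto (fun n => a n / a (n - 1)) l atTop) : Tendsto (qr a) l atTop :=
  (tendsto_natCast_atTop_atTop.comp hq).congr ha.cast_div_eq_qr

end Ratio

section Tail

variable {a c : ℕ → ℕ}

/-- `c` is a sequence of digits for the ratios `a n / a (n - 1)`, not necessarily normalised as in
`IsCanonicalRep`. The digit `c 0` is unconstrained, as it only contributes an integer. -/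
def IsDigitSeq (a c : ℕ → ℕ) : Prop := ∀ n, 1 ≤ n → c n < a n / a (n - 1)

/-- The tail `a n * ∑_{k > n} c k / a k` of the expansion with digits `c`: the representative in
`[0, 1]` of `a n • x` when `x = ∑ c k / a k` modulo `1`. -/
noncomputable def digitTail (a c : ℕ → ℕ) (n : ℕ) : ℝ :=
  a n * ∑' k, (c (k + (n + 1)) : ℝ) / a (k + (n + 1))

theorem digitTail_nonneg (n : ℕ) : 0 ≤ digitTail a c n := by
  unfold digitTail
  positivity

theorem digit_div_le_sub (ha : IsArithmeticSeq a) (hc : IsDigitSeq a c)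
    (n : ℕ) : (c (n + 1) : ℝ) / a (n + 1) ≤ 1 / a n - 1 / a (n + 1) := by
  have hdigit : (c (n + 1) : ℝ) + 1 ≤ a (n + 1) / a n := by
    have : (c (n + 1) : ℝ) + 1 ≤ ((a (n + 1) / a n : ℕ) : ℝ) := by
      exact_mod_cast hc (n + 1) n.succ_pos
    exact this.trans_eq (ha.cast_div_eq_qr (n + 1))
  have := ha.cast_pos n
  have := ha.cast_pos (n + 1)
  rw [le_sub_iff_add_le, ← add_div, div_le_div_iff₀ ‹_› ‹_›]
  rwa [le_div_iff₀ ‹_›, ← one_mul (a (n + 1) : ℝ)] at hdigit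

theorem sum_digit_div_le (ha : IsArithmeticSeq a) (hc : IsDigitSeq a c)
    (n m : ℕ) :
    ∑ k ∈ Finset.range m, (c (k + (n + 1)) : ℝ) / a (k + (n + 1)) ≤ 1 / a n :=
  calc ∑ k ∈ Finset.range m, (c (k + (n + 1)) : ℝ) / a (k + (n + 1))
      ≤ ∑ k ∈ Finset.range m, ((1 : ℝ) / a (k + n) - 1 / a (k + 1 + n)) := by
        refine Finset.sum_le_sum fun k _ => ?_
        simpa only [add_assoc, add_comm 1 n] using digit_div_le_sub ha hc (k + n)
    _ = 1 / a n - 1 / a (m + n) := by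
        simpa using Finset.sum_range_sub' (fun k => (1 : ℝ) / a (k + n)) m
    _ ≤ 1 / a n := sub_le_self _ (by positivity)

theorem summable_digit_div (ha : IsArithmeticSeq a) (hc : IsDigitSeq a c) :
    Summable fun n => (c n : ℝ) / a n :=
  (summable_nat_add_iff 1).1 <|
    summable_of_sum_range_le (fun _ => by positivity) (sum_digit_div_le ha hc 0)

theorem digitTail_le_one (ha : IsArithmeticSeq a) (hc : IsDigitSeq a c)
    (n : ℕ) : digitTail a c n ≤ 1 := by
  have htsum := Real.tsum_le_of_sum_range_le (fun _ => by positivity) (sum_digit_div_le ha hc n)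
  rwa [le_div_iff₀' (ha.cast_pos n)] at htsum

theorem digitTail_eq_add (ha : IsArithmeticSeq a) (hc : IsDigitSeq a c)
    (n : ℕ) :
    digitTail a c n = c (n + 1) / qr a (n + 1) + digitTail a c (n + 1) / qr a (n + 1) := by
  have := (ha.cast_pos n).ne'
  have := (ha.cast_pos (n + 1)).ne'
  have hsum := (summable_nat_add_iff (n + 1)).2 (summable_digit_div ha hc)
  have hshift (k : ℕ) : k + 1 + (n + 1) = k + (n + 1 + 1) := by lia
  rw [digitTail, hsum.tsum_eq_zero_add]
  simp only [hshift, zero_add, digitTail, qr, Nat.add_sub_cancel]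
  field_simp

theorem exists_nat_mul_sum_digit_div_eq (ha : IsArithmeticSeq a) (n : ℕ) :
    ∃ z : ℕ, (a n : ℝ) * ∑ k ∈ Finset.range (n + 1), (c k : ℝ) / a k = z := by
  refine ⟨∑ k ∈ Finset.range (n + 1), a n / a k * c k, ?_⟩
  rw [Finset.mul_sum, Nat.cast_sum]
  refine Finset.sum_congr rfl fun k hk => ?_
  rw [Nat.cast_mul, Nat.cast_div (ha.dvd (Finset.mem_range_succ_iff.1 hk)) (ha.cast_pos k).ne']
  ring

theorem nsmul_coe_tsum_eq_coe_digitTail (ha : IsArithmeticSeq a) (hc : IsDigitSeq a c) (n : ℕ) :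
    a n • ((∑' k, (c k : ℝ) / a k : ℝ) : AddCircle (1 : ℝ)) =
      (digitTail a c n : AddCircle (1 : ℝ)) := by
  obtain ⟨z, hz⟩ := exists_nat_mul_sum_digit_div_eq (c := c) ha n
  have hz_zero : ((z : ℝ) : AddCircle (1 : ℝ)) = 0 :=
    (AddCircle.coe_eq_zero_iff 1).2 ⟨z, by simp⟩
  rw [← AddCircle.coe_nsmul, nsmul_eq_mul,
    ← (summable_digit_div ha hc).sum_add_tsum_nat_add (n + 1), mul_add, hz, AddCircle.coe_add,
    hz_zero, zero_add, digitTail]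

theorem digitTail_succ_div_qr_nonneg (ha : IsArithmeticSeq a) (n : ℕ) :
    0 ≤ digitTail a c (n + 1) / qr a (n + 1) :=
  div_nonneg (digitTail_nonneg _) (ha.qr_pos _).le

theorem digitTail_succ_div_qr_le (ha : IsArithmeticSeq a) (hc : IsDigitSeq a c) (n : ℕ) :
    digitTail a c (n + 1) / qr a (n + 1) ≤ 1 / qr a (n + 1) :=
  div_le_div_of_nonneg_right (digitTail_le_one ha hc _) (ha.qr_pos _).le

theorem digit_div_qr_le_digitTail (ha : IsArithmeticSeq a) (hc : IsDigitSeq a c) (n : ℕ) :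
    (c (n + 1) : ℝ) / qr a (n + 1) ≤ digitTail a c n := by
  rw [digitTail_eq_add ha hc]
  exact le_add_of_nonneg_right (digitTail_succ_div_qr_nonneg ha n)

theorem digitTail_eq_div_of_notMem_suppRep (ha : IsArithmeticSeq a) (hc : IsDigitSeq a c)
    {n : ℕ} (hn : n + 1 ∉ suppRep c) :
    digitTail a c n = digitTail a c (n + 1) / qr a (n + 1) := by
  have hzero : c (n + 1) = 0 := by simpa [suppRep] using hn
  simpa [hzero] using digitTail_eq_add ha hc n

theorem digitTail_le_half_of_notMem_suppRep (ha : IsArithmeticSeq a) (hc : IsDigitSeq a c)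
    {n : ℕ} (hn : n + 1 ∉ suppRep c) :
    digitTail a c n ≤ digitTail a c (n + 1) / 2 := by
  rw [digitTail_eq_div_of_notMem_suppRep ha hc hn]
  exact div_le_div_of_nonneg_left (digitTail_nonneg _) two_pos (ha.two_le_qr_succ n)

end Tail

section Limits

variable {F : Filter ℕ} {a c : ℕ → ℕ}

theorem tendsto_qr_succ_atTop (hF : map (· + 1) F = F) (ha : IsArithmeticSeq a)
    (hq : Tendsto (fun n => a n / a (n - 1)) (F ⊓ 𝓟 (suppRep c)) atTop) :
    Tendsto (fun n => qr a (n + 1)) (F ⊓ 𝓟 ((· + 1) ⁻¹' suppRep c)) atTop :=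
  (tendsto_inf_principal_succ_iff hF).2 (ha.tendsto_qr hq)

theorem tendsto_digitTail_succ_div_qr {l : Filter ℕ} (ha : IsArithmeticSeq a)
    (hc : IsDigitSeq a c) (hq : Tendsto (fun n => qr a (n + 1)) l atTop) :
    Tendsto (fun n => digitTail a c (n + 1) / qr a (n + 1)) l (𝓝 0) :=
  squeeze_zero (digitTail_succ_div_qr_nonneg ha) (digitTail_succ_div_qr_le ha hc)
    (tendsto_const_nhds.div_atTop hq)

theorem tendsto_coe_digitTail_iff_tendsto_coe_digit_div_qr (hF : map (· + 1) F = F)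
    (ha : IsArithmeticSeq a) (hc : IsDigitSeq a c)
    (hq : Tendsto (fun n => a n / a (n - 1)) (F ⊓ 𝓟 (suppRep c)) atTop) :
    Tendsto (fun n => (digitTail a c n : AddCircle (1 : ℝ)))
        (F ⊓ 𝓟 ((· + 1) ⁻¹' suppRep c)) (𝓝 0) ↔
      Tendsto (fun n => (((c n : ℝ) / qr a n : ℝ) : AddCircle (1 : ℝ)))
        (F ⊓ 𝓟 (suppRep c)) (𝓝 0) := by
  have hrem := tendsto_coe_addCircle_zero 1
    (tendsto_digitTail_succ_div_qr ha hc (tendsto_qr_succ_atTop hF ha hq))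
  have hdigit (n : ℕ) : (c (n + 1) : ℝ) / qr a (n + 1) =
      digitTail a c n - digitTail a c (n + 1) / qr a (n + 1) :=
    eq_sub_of_add_eq (digitTail_eq_add ha hc n).symm
  refine Iff.trans ?_ (tendsto_inf_principal_succ_iff hF)
  constructor <;> intro h
  · simpa [hdigit] using h.sub hrem
  · simpa [hdigit] using h.add hrem

theorem tendsto_coe_digitTail_iff_of_notMem_suppRep (ha : IsArithmeticSeq a) (hc : IsDigitSeq a c) :
    Tendsto (fun n => (digitTail a c n : AddCircle (1 : ℝ)))
        (F ⊓ 𝓟 ((· + 1) ⁻¹' suppRep c)ᶜ) (𝓝 0) ↔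
      Tendsto (digitTail a c) (F ⊓ 𝓟 ((· + 1) ⁻¹' suppRep c)ᶜ) (𝓝 0) := by
  refine tendsto_coe_addCircle_zero_iff one_ne_zero
    (eventually_inf_principal.2 (.of_forall fun n hn => ?_))
  rw [abs_of_nonneg (digitTail_nonneg n), abs_one]
  linarith [digitTail_le_half_of_notMem_suppRep ha hc hn, digitTail_le_one ha hc (n + 1)]

theorem tendsto_digit_div_qr_of_tendsto_digitTail (hF : map (· + 1) F = F)
    (ha : IsArithmeticSeq a) (hc : IsDigitSeq a c)
    (hq : Tendsto (fun n => a n / a (n - 1)) (F ⊓ 𝓟 (suppRep c)) atTop)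
    (hr : Tendsto (digitTail a c) (F ⊓ 𝓟 ((· + 1) ⁻¹' suppRep c)ᶜ) (𝓝 0))
    {D : Set ℕ} (hD : QBounded a ((fun n => n - 1) '' D)) :
    Tendsto (fun n => (c n : ℝ) / qr a n) (F ⊓ 𝓟 D) (𝓝 0) := by
  obtain ⟨M, hM⟩ := hD
  rw [← tendsto_inf_principal_succ_iff hF, ← tendsto_inf_principal_succ_iff hF]
  set G := F ⊓ 𝓟 ((· + 1) ⁻¹' ((· + 1) ⁻¹' D))
  have hqM : ∀ᶠ n in G, qr a (n + 1) ≤ M := by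
    refine eventually_inf_principal.2 (.of_forall fun n hn => ?_)
    rw [← ha.cast_div_eq_qr]
    exact_mod_cast hM (n + 1) ⟨n + 2, hn, rfl⟩
  have hnotMem : ∀ᶠ n in G, n + 1 ∉ suppRep c := by
    have hlarge := (tendsto_qr_succ_atTop hF ha hq).eventually_gt_atTop (M : ℝ)
    filter_upwards [hqM, (eventually_inf_principal.1 hlarge).filter_mono inf_le_left]
      with n hle hgt hmem
    exact (hgt hmem).not_ge hle
  have hrG : Tendsto (digitTail a c) G (𝓝 0) :=
    hr.mono_left (le_inf inf_le_left (le_principal_iff.2 hnotMem))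
  refine squeeze_zero' (.of_forall fun n => by have := ha.qr_pos (n + 1 + 1); positivity) ?_
    (by simpa using hrG.const_mul (M : ℝ))
  filter_upwards [hqM, hnotMem] with n hle hn
  calc (c (n + 1 + 1) : ℝ) / qr a (n + 1 + 1)
      ≤ digitTail a c (n + 1) := digit_div_qr_le_digitTail ha hc (n + 1)
    _ = qr a (n + 1) * digitTail a c n := by
        rw [digitTail_eq_div_of_notMem_suppRep ha hc hn, mul_div_cancel₀ _ (ha.qr_pos _).ne']
    _ ≤ M * digitTail a c n := mul_le_mul_of_nonneg_right hle (digitTail_nonneg n)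

theorem eventually_digitTail_le_of_add_two_mem (hF : map (· + 1) F = F)
    (ha : IsArithmeticSeq a) (hc : IsDigitSeq a c)
    (hq : Tendsto (fun n => a n / a (n - 1)) (F ⊓ 𝓟 (suppRep c)) atTop)
    (hbdd : ∀ D ⊆ suppRep c, QBounded a ((fun n => n - 1) '' D) →
      Tendsto (fun n => (c n : ℝ) / qr a n) (F ⊓ 𝓟 D) (𝓝 0))
    {ε : ℝ} (hε : 0 < ε) :
    ∀ᶠ n in F, n + 1 ∉ suppRep c → n + 2 ∈ suppRep c → digitTail a c n ≤ ε := by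
  obtain ⟨M, hM⟩ := exists_nat_gt (1 / ε)
  set D := {n ∈ suppRep c | a (n - 1) / a (n - 1 - 1) ≤ M}
  have hDtail : Tendsto (fun n => digitTail a c (n + 1))
      (F ⊓ 𝓟 ((· + 1) ⁻¹' ((· + 1) ⁻¹' D))) (𝓝 0) := by
    refine (tendsto_inf_principal_succ_iff hF).2 ?_
    have hdigit := (tendsto_inf_principal_succ_iff hF).2
      (hbdd D (sep_subset _ _) ⟨M, by rintro _ ⟨n, hn, rfl⟩; exact hn.2⟩)
    have hrem := (tendsto_digitTail_succ_div_qr ha hc (tendsto_qr_succ_atTop hF ha hq)).mono_left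
      (inf_le_inf_left F (principal_mono.2 (preimage_mono (sep_subset _ _ : D ⊆ suppRep c))))
    simpa [← digitTail_eq_add ha hc] using hdigit.add hrem
  filter_upwards [eventually_inf_principal.1 (hDtail.eventually_le_const hε)] with n hn hn₁ hn₂
  by_cases hqM : a (n + 1) / a n ≤ M
  · linarith [hn ⟨hn₂, hqM⟩, digitTail_le_half_of_notMem_suppRep ha hc hn₁,
      digitTail_nonneg (a := a) (c := c) (n + 1)]
  · have hMq : (M : ℝ) < qr a (n + 1) := by
      rw [← ha.cast_div_eq_qr]
      exact_mod_cast not_le.1 hqM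
    rw [digitTail_eq_div_of_notMem_suppRep ha hc hn₁]
    refine (digitTail_succ_div_qr_le ha hc n).trans ?_
    exact (one_div_le hε (ha.qr_pos _)).1 (hM.trans hMq).le

theorem tendsto_digitTail_of_notMem_suppRep (hF : map (· + 1) F = F)
    (ha : IsArithmeticSeq a) (hc : IsDigitSeq a c)
    (hq : Tendsto (fun n => a n / a (n - 1)) (F ⊓ 𝓟 (suppRep c)) atTop)
    (hbdd : ∀ D ⊆ suppRep c, QBounded a ((fun n => n - 1) '' D) →
      Tendsto (fun n => (c n : ℝ) / qr a n) (F ⊓ 𝓟 D) (𝓝 0)) :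
    Tendsto (digitTail a c) (F ⊓ 𝓟 ((· + 1) ⁻¹' suppRep c)ᶜ) (𝓝 0) := by
  set A := ((· + 1) ⁻¹' suppRep c)ᶜ
  suffices Tendsto (A.indicator (digitTail a c)) F (𝓝 0) by
    refine (this.mono_left inf_le_left).congr' (eventually_inf_principal.2 ?_)
    exact .of_forall fun n hn => indicator_of_mem hn _
  have hnonneg (n : ℕ) : 0 ≤ A.indicator (digitTail a c) n :=
    indicator_nonneg (fun n _ => digitTail_nonneg n) n
  refine tendsto_zero_of_eventually_le_max_half hF hnonneg
    (indicator_le' (fun n _ => digitTail_le_one ha hc n) fun _ _ => zero_le_one) fun ε hε => ?_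
  filter_upwards [eventually_digitTail_le_of_add_two_mem hF ha hc hq hbdd hε] with n hn
  by_cases hn₁ : n ∈ A
  · rw [indicator_of_mem hn₁]
    by_cases hn₂ : n + 1 ∈ A
    · rw [indicator_of_mem hn₂]
      exact le_max_of_le_right (digitTail_le_half_of_notMem_suppRep ha hc hn₁)
    · exact le_max_of_le_left (hn hn₁ (not_not.1 hn₂))
  · rw [indicator_of_notMem hn₁]
    exact le_max_of_le_left hε.le

/-- Ordinary convergence is the case `F = atTop`, statistical convergence is `F = densityOne`. -/
theorem sTorsion_iff_of_qDivergent_supp_general (hF : map (· + 1) F = F)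
    (ha : IsArithmeticSeq a) (hc : IsDigitSeq a c) (x : AddCircle (1 : ℝ))
    (hx : x = ((∑' n, (c n : ℝ) / (a n : ℝ) : ℝ) : AddCircle (1 : ℝ)))
    (hq : Tendsto (fun n => a n / a (n - 1)) (F ⊓ 𝓟 (suppRep c)) atTop) :
    Tendsto (fun n => a n • x) F (𝓝 0) ↔
      Tendsto (fun n => (((c n : ℝ) / qr a n : ℝ) : AddCircle (1 : ℝ)))
          (F ⊓ 𝓟 (suppRep c)) (𝓝 0) ∧
        ∀ D ⊆ suppRep c, QBounded a ((fun n => n - 1) '' D) →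
          Tendsto (fun n => (c n : ℝ) / qr a n) (F ⊓ 𝓟 D) (𝓝 0) := by
  have hsplit : F = F ⊓ 𝓟 ((· + 1) ⁻¹' suppRep c) ⊔ F ⊓ 𝓟 ((· + 1) ⁻¹' suppRep c)ᶜ := by
    rw [← inf_sup_left, sup_principal, union_compl_self, principal_univ, inf_top_eq]
  simp only [hx, nsmul_coe_tsum_eq_coe_digitTail ha hc]
  conv_lhs => rw [hsplit]
  rw [tendsto_sup, tendsto_coe_digitTail_iff_tendsto_coe_digit_div_qr hF ha hc hq,
    tendsto_coe_digitTail_iff_of_notMem_suppRep ha hc]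
  exact and_congr_right' ⟨fun hr D _ => tendsto_digit_div_qr_of_tendsto_digitTail hF ha hc hq hr,
    tendsto_digitTail_of_notMem_suppRep hF ha hc hq⟩

end Limits

/-- Corollary: if `supp(x)` is `q`-divergent, then `x ∈ t^s_{(a_n)}(𝕋)` iff
(i) `c_n/q_n → 0` in `𝕋` along some `D' ⊆ supp(x)` with `d(supp(x) \ D') = 0`;
(ii) for every `D ⊆ supp(x)` with `d(D \ supp(x)) = 0` such that `D - 1` is
`q`-bounded, `c_n/q_n → 0` in `ℝ` along some `D' ⊆ D` with `d(D \ D') = 0`. -/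
theorem sTorsion_iff_of_qDivergent_supp (a c : ℕ → ℕ) (ha : IsArithmeticSeq a)
    (hc : IsCanonicalRep a c) (x : AddCircle (1 : ℝ))
    (hx : x = ((∑' n, (c n : ℝ) / (a n : ℝ) : ℝ) : AddCircle (1 : ℝ)))
    (hqd : QDivergent a (suppRep c)) :
    StatNhdTendsto (fun n => a n • x) (0 : AddCircle (1 : ℝ)) ↔
      ((∃ D' ⊆ suppRep c, HasDensity (suppRep c \ D') 0 ∧
          Filter.Tendsto (fun n => (((c n : ℝ) / qr a n : ℝ) : AddCircle (1 : ℝ)))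
            (Filter.atTop ⊓ Filter.principal D') (nhds 0)) ∧
        ∀ D ⊆ suppRep c, HasDensity (D \ suppRep c) 0 →
          QBounded a ((fun n => n - 1) '' D) →
            ∃ D' ⊆ D, HasDensity (D \ D') 0 ∧
              Filter.Tendsto (fun n => (c n : ℝ) / qr a n)
                (Filter.atTop ⊓ Filter.principal D') (nhds 0)) := by
  have hq : Tendsto (fun n => a n / a (n - 1)) (densityOne ⊓ 𝓟 (suppRep c)) atTop :=
    hqd.mono_left (inf_le_inf_right _ densityOne_le_atTop)
  rw [statNhdTendsto_iff_tendsto_densityOne,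
    sTorsion_iff_of_qDivergent_supp_general map_succ_densityOne ha hc.2.1 x hx hq]
  simp +contextual only [exists_subset_tendsto_iff_tendsto_densityOne, sdiff_eq_empty.2,
    hasDensity_empty, forall_const]
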